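/- arXiv:1701.07682 — 2 statements merged into one kernel-verified Lean document; each statement's English description precedes it below -/
import Mathlib

section
/- Let λ > -1/2 and m ≥ 1, and set λ' = min{0,λ}, λ'' = max{0,λ}, c_4 = 4/((2λ+1)²(2λ+5)) and F_0(x) = x²(x + λ/2)²(x + λ)². Then the squared Frobenius norm of A_m satisfies c_4·(m+λ')(m+λ'+4)·F_0(m) ≤ ‖A_m‖_F² ≤ c_4·(m+λ+λ''+5/2)²·F_0(m+1/2). -/
/-- `h_x^2 = Γ(x+2λ)/((x+λ)Γ(x+1))`. -/
noncomputable def hsq (lam x : ℝ) : ℝ :=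
  Real.Gamma (x + 2*lam) / ((x + lam) * Real.Gamma (x + 1))

/-- `α_k = (2k-1+λ) h_{2k-1}`. -/
noncomputable def gegAlpha (lam : ℝ) (k : ℕ) : ℝ :=
  (2*(k:ℝ) - 1 + lam) * Real.sqrt (hsq lam (2*(k:ℝ) - 1))

/-- `β_k = 1/h_{2k}`. -/
noncomputable def gegBeta (lam : ℝ) (k : ℕ) : ℝ :=
  1 / Real.sqrt (hsq lam (2*(k:ℝ)))

/-- `α̃_k^2 = ((2k-2+λ) h_{2k-2})^2`, with `α̃_1^2 = λΓ(2λ) = Γ(2λ+1)/2`. -/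
noncomputable def gegAlphaTildeSq (lam : ℝ) (k : ℕ) : ℝ :=
  if k = 1 then Real.Gamma (2*lam + 1) / 2
  else (2*(k:ℝ) - 2 + lam)^2 * hsq lam (2*(k:ℝ) - 2)

/-- `β̃_k = 1/h_{2k-1}`. -/
noncomputable def gegBetaTilde (lam : ℝ) (k : ℕ) : ℝ :=
  1 / Real.sqrt (hsq lam (2*(k:ℝ) - 1))

/-- The matrix `A_m` with entries `a_{kj} = (Σ_{i=1}^{min(k,j)} α_i^2) β_k β_j` (1-based). -/
noncomputable def Amat (lam : ℝ) (m : ℕ) : Matrix (Fin m) (Fin m) ℝ :=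
  fun k j => (∑ i ∈ Finset.Icc 1 (min (k.val+1) (j.val+1)), (gegAlpha lam i)^2) *
    gegBeta lam (k.val+1) * gegBeta lam (j.val+1)

/-- The matrix `Ã_m` with entries `ã_{kj} = (Σ_{i=1}^{min(k,j)} α̃_i^2) β̃_k β̃_j` (1-based). -/
noncomputable def AmatTilde (lam : ℝ) (m : ℕ) : Matrix (Fin m) (Fin m) ℝ :=
  fun k j => (∑ i ∈ Finset.Icc 1 (min (k.val+1) (j.val+1)), gegAlphaTildeSq lam i) *
    gegBetaTilde lam (k.val+1) * gegBetaTilde lam (j.val+1)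

/-- `B_n = 4 A_m` for `n = 2m` and `B_n = 4 Ã_m` for `n = 2m-1`; in both cases `m = (n+1)/2`. -/
noncomputable def Bmat (lam : ℝ) (n : ℕ) : Matrix (Fin ((n+1)/2)) (Fin ((n+1)/2)) ℝ :=
  if n % 2 = 0 then (4:ℝ) • Amat lam ((n+1)/2) else (4:ℝ) • AmatTilde lam ((n+1)/2)

/-- Maximum absolute row-sum norm. -/
noncomputable def rowSumNorm {m : ℕ} (A : Matrix (Fin m) (Fin m) ℝ) : ℝ :=
  ⨆ k, ∑ j, |A k j|

/-- Squared Frobenius norm. -/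
noncomputable def frobSq {m : ℕ} (A : Matrix (Fin m) (Fin m) ℝ) : ℝ :=
  ∑ k, ∑ j, (A k j)^2

/-!
With `s = m (m + 1 + λ)`, the squared Frobenius norm has the closed form
`‖A_m‖_F² = c₄ · s (s + λ) · q(s)` for a quadratic `q`. It is obtained by telescoping: by the
recurrence for `h²`, both `S_k = Σ_{i ≤ k} α_i²` and `Σ_{j ≤ k} (S_j β_j)²` are polynomials in `k`
times `h_{2k}²`. Everything then reduces to
`s (s + λ) ≤ q(s) ≤ (s + (λ + 1)(2λ + 5)/4)²`: the left side of this chain gives the lower bound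
`c₄ (m (m + 1) (m + λ) (m + 1 + λ))²`, and on the right
`s + (λ + 1)(2λ + 5)/4 ≤ (m + 1/2 + λ/2)(m + λ + 5/2)`.
-/

open Finset Real

theorem sum_sum_min_insert {ι R : Type*} [LinearOrder ι] [CommSemiring R] (S b : ι → R)
    {s : Finset ι} {a : ι} (ha : ∀ j ∈ s, j < a) :
    ∑ k ∈ insert a s, ∑ j ∈ insert a s, (S (min k j) * b k * b j) ^ 2 =
      ∑ k ∈ s, ∑ j ∈ s, (S (min k j) * b k * b j) ^ 2 +
        2 * ((∑ j ∈ s, (S j * b j) ^ 2) * b a ^ 2) + (S a * b a ^ 2) ^ 2 := by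
  have ha' : a ∉ s := fun h => (ha a h).false
  have row : ∑ j ∈ s, (S (min a j) * b a * b j) ^ 2 = (∑ j ∈ s, (S j * b j) ^ 2) * b a ^ 2 := by
    rw [sum_mul]
    refine sum_congr rfl fun j hj => ?_
    rw [min_eq_right (ha j hj).le]
    ring
  have column : ∑ k ∈ s, (S (min k a) * b k * b a) ^ 2 =
      (∑ j ∈ s, (S j * b j) ^ 2) * b a ^ 2 := by
    rw [← row]
    refine sum_congr rfl fun k _ => ?_
    rw [min_comm, mul_right_comm]
  simp only [sum_insert ha', sum_add_distrib, row, column, min_self]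
  ring

theorem sum_fin_val_add_one {M : Type*} [AddCommMonoid M] (f : ℕ → M) (m : ℕ) :
    ∑ k : Fin m, f (k + 1) = ∑ k ∈ Icc 1 m, f k := by
  rw [Fin.sum_univ_eq_sum_range fun k => f (k + 1), range_eq_Ico, sum_Ico_add' f, zero_add,
    Ico_add_one_right_eq_Icc]

section Gegenbauer

variable {lam : ℝ}

theorem hsq_pos {x : ℝ} (hx : 0 < x) (hx' : 0 < x + 2 * lam) : 0 < hsq lam x := by
  have : 0 < x + lam := by linarith
  have := Gamma_pos_of_pos hx'
  have : 0 < Gamma (x + 1) := Gamma_pos_of_pos (by linarith)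
  unfold hsq
  positivity

theorem mul_hsq_add_one {x : ℝ} (h₁ : x + 1 ≠ 0) (hlam : x + lam ≠ 0) (hlam₁ : x + 1 + lam ≠ 0)
    (h2lam : x + 2 * lam ≠ 0) :
    (x + 1 + lam) * (x + 1) * hsq lam (x + 1) = (x + lam) * (x + 2 * lam) * hsq lam x := by
  rw [hsq, hsq, add_right_comm x 1 (2 * lam), Gamma_add_one h2lam, Gamma_add_one h₁]
  field_simp

theorem mul_hsq_two_mul_add_one {x : ℝ} (hlam : -(1 / 2 : ℝ) < lam) (hx : 1 ≤ x) :
    (2 * x + 1 + lam) * (2 * x + 1) * hsq lam (2 * x + 1) =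
      (2 * x + lam) * (2 * x + 2 * lam) * hsq lam (2 * x) :=
  mul_hsq_add_one (by linarith) (by linarith) (by linarith) (by linarith)

theorem mul_hsq_two_mul_add_two {x : ℝ} (hlam : -(1 / 2 : ℝ) < lam) (hx : 0 ≤ x) :
    (2 * x + 2 + lam) * (2 * x + 2) * hsq lam (2 * (x + 1)) =
      (2 * x + 1 + lam) * (2 * x + 1 + 2 * lam) * hsq lam (2 * x + 1) := by
  convert mul_hsq_add_one (lam := lam) (x := 2 * x + 1) (by linarith) (by linarith) (by linarith)
    (by linarith) using 3 <;> ring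

theorem gegAlpha_add_one_sq (hlam : -(1 / 2 : ℝ) < lam) (k : ℕ) :
    gegAlpha lam (k + 1) ^ 2 = (2 * (k : ℝ) + 1 + lam) ^ 2 * hsq lam (2 * (k : ℝ) + 1) := by
  have : (0 : ℝ) ≤ k := k.cast_nonneg
  rw [gegAlpha, Nat.cast_succ, show 2 * ((k : ℝ) + 1) - 1 = 2 * k + 1 by ring, mul_pow,
    sq_sqrt (hsq_pos (by linarith) (by linarith)).le]

theorem gegBeta_sq (hlam : -(1 / 2 : ℝ) < lam) {k : ℕ} (hk : 1 ≤ k) :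
    gegBeta lam k ^ 2 = (hsq lam (2 * (k : ℝ)))⁻¹ := by
  have hk' : (1 : ℝ) ≤ k := by exact_mod_cast hk
  rw [gegBeta, div_pow, sq_sqrt (hsq_pos (by linarith) (by linarith)).le, one_pow, one_div]

/-- The partial sums `Σ_{i=1}^{k} α_i²`, so that `a_{kj} = gegAlphaSum lam (min k j) β_k β_j`. -/
noncomputable def gegAlphaSum (lam : ℝ) (k : ℕ) : ℝ :=
  ∑ i ∈ Icc 1 k, gegAlpha lam i ^ 2

theorem gegAlphaSum_add_one (lam : ℝ) (k : ℕ) :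
    gegAlphaSum lam (k + 1) = gegAlphaSum lam k + gegAlpha lam (k + 1) ^ 2 :=
  sum_Icc_succ_top (Nat.le_add_left 1 k) _

theorem mul_gegAlphaSum (hlam : -(1 / 2 : ℝ) < lam) {k : ℕ} (hk : 1 ≤ k) :
    (2 * lam + 1) * gegAlphaSum lam k =
      2 * (k : ℝ) * (k + lam) * (2 * k + lam) * hsq lam (2 * (k : ℝ)) := by
  induction k, hk using Nat.le_induction with
  | base =>
    have hα := gegAlpha_add_one_sq hlam 0
    have h₂ := mul_hsq_two_mul_add_two hlam le_rfl
    simp only [Nat.cast_zero, mul_zero, zero_add, mul_one] at hα h₂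
    rw [gegAlphaSum, Icc_self, sum_singleton, hα, Nat.cast_one, mul_one]
    linear_combination -(1 + lam) * h₂
  | succ k hk ih =>
    have hk' : (1 : ℝ) ≤ k := by exact_mod_cast hk
    have h₁ := mul_hsq_two_mul_add_one hlam hk'
    have h₂ := mul_hsq_two_mul_add_two hlam (zero_le_one.trans hk')
    rw [gegAlphaSum_add_one, gegAlpha_add_one_sq hlam, Nat.cast_succ]
    linear_combination ih - k * h₁ - (k + 1 + lam) * h₂

theorem gegAlphaSum_mul_gegBeta_sq (hlam : -(1 / 2 : ℝ) < lam) {k : ℕ} (hk : 1 ≤ k) :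
    gegAlphaSum lam k * gegBeta lam k ^ 2 =
      2 * (k : ℝ) * (k + lam) * (2 * k + lam) / (2 * lam + 1) := by
  have hk' : (1 : ℝ) ≤ k := by exact_mod_cast hk
  rw [eq_div_iff (by linarith), gegBeta_sq hlam hk, mul_right_comm, mul_comm _ (2 * lam + 1),
    mul_gegAlphaSum hlam hk, mul_inv_cancel_right₀ (hsq_pos (by linarith) (by linarith)).ne']

theorem mul_sq_gegAlphaSum_mul_gegBeta (hlam : -(1 / 2 : ℝ) < lam) {k : ℕ} (hk : 1 ≤ k) :
    (2 * lam + 1) ^ 2 * (gegAlphaSum lam k * gegBeta lam k) ^ 2 =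
      (2 * (k : ℝ) * (k + lam) * (2 * k + lam)) ^ 2 * hsq lam (2 * (k : ℝ)) := by
  have hk' : (1 : ℝ) ≤ k := by exact_mod_cast hk
  have := (hsq_pos (lam := lam) (x := 2 * (k : ℝ)) (by linarith) (by linarith)).ne'
  rw [mul_pow, ← mul_assoc, ← mul_pow, mul_gegAlphaSum hlam hk, gegBeta_sq hlam hk]
  field_simp

theorem mul_sum_sq_gegAlphaSum_mul_gegBeta (hlam : -(1 / 2 : ℝ) < lam) {k : ℕ} (hk : 1 ≤ k) :
    (2 * lam + 1) ^ 2 * (2 * lam + 3) * (2 * lam + 5) *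
        ∑ j ∈ Icc 1 k, (gegAlphaSum lam j * gegBeta lam j) ^ 2 =
      4 * (k : ℝ) * (k + lam) * (2 * k + lam) * (k + 1 + lam) * (2 * k + 1 + 2 * lam) *
        ((2 * lam + 3) * k * (k + 1 + lam) - 1) * hsq lam (2 * (k : ℝ)) := by
  induction k, hk using Nat.le_induction with
  | base =>
    have summand := mul_sq_gegAlphaSum_mul_gegBeta hlam le_rfl
    rw [Nat.cast_one] at summand ⊢
    rw [Icc_self, sum_singleton]
    linear_combination (2 * lam + 3) * (2 * lam + 5) * summand
  | succ k hk ih =>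
    have hk' : (1 : ℝ) ≤ k := by exact_mod_cast hk
    have h₁ := mul_hsq_two_mul_add_one hlam hk'
    have h₂ := mul_hsq_two_mul_add_two hlam (zero_le_one.trans hk')
    have summand := mul_sq_gegAlphaSum_mul_gegBeta hlam (Nat.le_add_left 1 k)
    rw [Nat.cast_succ] at summand ⊢
    rw [sum_Icc_succ_top (Nat.le_add_left 1 k)]
    linear_combination ih + (2 * lam + 3) * (2 * lam + 5) * summand -
      2 * k * (k + 1 + lam) * ((2 * lam + 3) * k * (k + 1 + lam) - 1) *
        ((2 * k + 1 + 2 * lam) * h₁ + (2 * k + 1) * h₂)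

theorem sum_sq_gegAlphaSum_mul_gegBeta_mul_gegBeta_sq (hlam : -(1 / 2 : ℝ) < lam) {k : ℕ}
    (hk : 1 ≤ k) :
    (∑ j ∈ Icc 1 k, (gegAlphaSum lam j * gegBeta lam j) ^ 2) * gegBeta lam k ^ 2 =
      4 * (k : ℝ) * (k + lam) * (2 * k + lam) * (k + 1 + lam) * (2 * k + 1 + 2 * lam) *
        ((2 * lam + 3) * k * (k + 1 + lam) - 1) /
          ((2 * lam + 1) ^ 2 * (2 * lam + 3) * (2 * lam + 5)) := by
  have hk' : (1 : ℝ) ≤ k := by exact_mod_cast hk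
  have h₁ : 0 < 2 * lam + 1 := by linarith
  have h₃ : 0 < 2 * lam + 3 := by linarith
  have h₅ : 0 < 2 * lam + 5 := by linarith
  rw [eq_div_iff (by positivity), gegBeta_sq hlam hk, mul_right_comm, mul_comm (∑ _ ∈ _, _),
    mul_sum_sq_gegAlphaSum_mul_gegBeta hlam hk,
    mul_inv_cancel_right₀ (hsq_pos (by linarith) (by linarith)).ne']

theorem frobSq_Amat_eq_sum_Icc (lam : ℝ) (m : ℕ) :
    frobSq (Amat lam m) = ∑ k ∈ Icc 1 m, ∑ j ∈ Icc 1 m,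
      (gegAlphaSum lam (min k j) * gegBeta lam k * gegBeta lam j) ^ 2 := by
  simp only [frobSq, ← sum_fin_val_add_one, gegAlphaSum, Amat]

theorem frobSq_Amat_add_one (lam : ℝ) (m : ℕ) :
    frobSq (Amat lam (m + 1)) = frobSq (Amat lam m) +
      (2 * ((∑ j ∈ Icc 1 (m + 1), (gegAlphaSum lam j * gegBeta lam j) ^ 2) *
        gegBeta lam (m + 1) ^ 2) - (gegAlphaSum lam (m + 1) * gegBeta lam (m + 1) ^ 2) ^ 2) := by
  rw [frobSq_Amat_eq_sum_Icc, frobSq_Amat_eq_sum_Icc,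
    ← insert_Icc_right_eq_Icc_add_one (Nat.le_add_left 1 m),
    sum_sum_min_insert _ _ fun j hj => Order.lt_add_one_iff.2 (mem_Icc.1 hj).2,
    sum_insert (by simp)]
  ring

/-- The quadratic `q` in the closed form `‖A_m‖_F² = c₄ · s (s + λ) · q(s)` with
`s = m (m + 1 + λ)`, normalized to be monic in `s`. -/
noncomputable def frobQuadratic (lam s : ℝ) : ℝ :=
  s ^ 2 + 2 * (lam + 2) * (2 * lam ^ 2 + 7 * lam + 2) / (3 * (2 * lam + 3)) * s +
    (2 * lam + 1) * (lam + 2) * (2 * lam ^ 2 + lam - 7) / (6 * (2 * lam + 3))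

theorem frobSq_Amat (hlam : -(1 / 2 : ℝ) < lam) (m : ℕ) :
    frobSq (Amat lam m) = 4 / ((2 * lam + 1) ^ 2 * (2 * lam + 5)) *
      ((m : ℝ) * (m + 1 + lam) * (m * (m + 1 + lam) + lam) *
        frobQuadratic lam (m * (m + 1 + lam))) := by
  have h₁ : 2 * lam + 1 ≠ 0 := by linarith
  have h₃ : 2 * lam + 3 ≠ 0 := by linarith
  have h₅ : 2 * lam + 5 ≠ 0 := by linarith
  induction m with
  | zero => simp [frobSq]
  | succ m ih =>
    rw [frobSq_Amat_add_one, ih,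
      sum_sq_gegAlphaSum_mul_gegBeta_mul_gegBeta_sq hlam (Nat.le_add_left 1 m),
      gegAlphaSum_mul_gegBeta_sq hlam (Nat.le_add_left 1 m), Nat.cast_succ, frobQuadratic,
      frobQuadratic]
    field_simp
    ring

theorem mul_add_le_frobQuadratic {s : ℝ} (hlam : -(1 / 2 : ℝ) < lam) (hs : 3 / 2 ≤ s) :
    s * (s + lam) ≤ frobQuadratic lam s := by
  have h₃ : 0 < 2 * lam + 3 := by linarith
  have difference : frobQuadratic lam s - s * (s + lam) = (2 * lam + 1) / (6 * (2 * lam + 3)) *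
      (2 * (2 * lam ^ 2 + 7 * lam + 8) * s + (lam + 2) * (2 * lam ^ 2 + lam - 7)) := by
    rw [frobQuadratic]
    field_simp
    ring
  have slope_nonneg : 0 ≤ 2 * (2 * lam ^ 2 + 7 * lam + 8) := by nlinarith
  have linear_nonneg :
      0 ≤ 2 * (2 * lam ^ 2 + 7 * lam + 8) * s + (lam + 2) * (2 * lam ^ 2 + lam - 7) :=
    calc (0 : ℝ)
      _ ≤ 2 * (2 * lam ^ 2 + 7 * lam + 8) * (3 / 2) + (lam + 2) * (2 * lam ^ 2 + lam - 7) := by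
        nlinarith [mul_nonneg (by linarith : 0 ≤ 2 * lam + 1) (sq_nonneg lam)]
      _ ≤ _ := by gcongr
  rw [← sub_nonneg, difference]
  exact mul_nonneg (div_nonneg (by linarith) (by linarith)) linear_nonneg

theorem frobQuadratic_le_sq {s : ℝ} (hlam : -(1 / 2 : ℝ) < lam) (hs : 0 ≤ s) :
    frobQuadratic lam s ≤ (s + (lam + 1) * (2 * lam + 5) / 4) ^ 2 := by
  -- In `v = 2λ + 1 > 0`, the difference of the two sides has only positive coefficients.
  obtain ⟨v, hv, rfl⟩ : ∃ v, 0 < v ∧ lam = (v - 1) / 2 := ⟨2 * lam + 1, by linarith, by ring⟩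
  have h₃ : v + 2 ≠ 0 := by linarith
  have difference : (s + ((v - 1) / 2 + 1) * (2 * ((v - 1) / 2) + 5) / 4) ^ 2 -
      frobQuadratic ((v - 1) / 2) s =
        ((v ^ 3 + 5 * v ^ 2 + 16 * v + 36) / 2 * s +
          (3 * (v + 2) * (v + 1) ^ 2 * (v + 4) ^ 2 / 32 - v * (v + 3) * (v ^ 2 - v - 14) / 4)) /
            (6 * (v + 2)) := by
    rw [frobQuadratic, show 2 * ((v - 1) / 2) + 3 = v + 2 by ring]
    field_simp
    ring
  have constant_nonneg :
      0 ≤ 3 * (v + 2) * (v + 1) ^ 2 * (v + 4) ^ 2 / 32 - v * (v + 3) * (v ^ 2 - v - 14) / 4 := by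
    ring_nf
    positivity
  rw [← sub_nonneg, difference]
  positivity

theorem le_frobSq_Amat (hlam : -(1 / 2 : ℝ) < lam) {m : ℕ} (hm : 1 ≤ m) :
    4 / ((2 * lam + 1) ^ 2 * (2 * lam + 5)) * ((m : ℝ) * (m + 1) * (m + lam) * (m + 1 + lam)) ^ 2 ≤
      frobSq (Amat lam m) := by
  have hm' : (1 : ℝ) ≤ m := by exact_mod_cast hm
  have h₅ : 0 < 2 * lam + 5 := by linarith
  have hs : 3 / 2 ≤ (m : ℝ) * (m + 1 + lam) := by nlinarith
  have hsl : 0 ≤ (m : ℝ) * (m + 1 + lam) + lam := by nlinarith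
  rw [frobSq_Amat hlam]
  calc
    _ = 4 / ((2 * lam + 1) ^ 2 * (2 * lam + 5)) *
        ((m : ℝ) * (m + 1 + lam) * (m * (m + 1 + lam) + lam) *
          (m * (m + 1 + lam) * (m * (m + 1 + lam) + lam))) := by ring
    _ ≤ _ := by
      gcongr
      exact mul_add_le_frobQuadratic hlam hs

theorem frobSq_Amat_le (hlam : -(1 / 2 : ℝ) < lam) {m : ℕ} (hm : 1 ≤ m) :
    frobSq (Amat lam m) ≤ 4 / ((2 * lam + 1) ^ 2 * (2 * lam + 5)) *
      (((m : ℝ) + 1 / 2) * (m + 1 / 2 + lam / 2) * (m + 1 / 2 + lam) * (m + lam + 5 / 2)) ^ 2 := by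
  have hm' : (1 : ℝ) ≤ m := by exact_mod_cast hm
  have h₅ : 0 < 2 * lam + 5 := by linarith
  set s : ℝ := m * (m + 1 + lam)
  have hs : 0 ≤ s := by nlinarith
  have quartic : s * (s + lam) ≤ ((m + 1 / 2) * (m + 1 / 2 + lam)) ^ 2 := by
    nlinarith [sq_nonneg (lam + 1 / 2)]
  have quadratic : frobQuadratic lam s ≤ ((m + 1 / 2 + lam / 2) * (m + lam + 5 / 2)) ^ 2 := by
    refine (frobQuadratic_le_sq hlam hs).trans (pow_le_pow_left₀ ?_ ?_ 2)
    · have : 0 ≤ lam + 1 := by linarith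
      positivity
    · nlinarith
  calc frobSq (Amat lam m)
    _ = 4 / ((2 * lam + 1) ^ 2 * (2 * lam + 5)) * (s * (s + lam) * frobQuadratic lam s) :=
      frobSq_Amat hlam m
    _ ≤ 4 / ((2 * lam + 1) ^ 2 * (2 * lam + 5)) * (((m + 1 / 2) * (m + 1 / 2 + lam)) ^ 2 *
        ((m + 1 / 2 + lam / 2) * (m + lam + 5 / 2)) ^ 2) := by
      have : 0 ≤ s + lam := by nlinarith
      gcongr ?_ * ?_
      exact mul_le_mul_of_nonneg quartic quadratic (by positivity) (by positivity)
    _ = _ := by ring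

end Gegenbauer

theorem add_min_mul_le_sq {lam x : ℝ} (hlam : -(1 / 2 : ℝ) < lam) (hx : 1 ≤ x) :
    (x + min 0 lam) * (x + min 0 lam + 4) * (x + lam / 2) ^ 2 ≤ ((x + 1) * (x + 1 + lam)) ^ 2 := by
  have root_le : (x + min 0 lam + 2) * (x + lam / 2) ≤ (x + 1) * (x + 1 + lam) := by
    rcases le_total 0 lam with h | h
    · rw [min_eq_left h]
      nlinarith
    · rw [min_eq_right h]
      nlinarith
  have : -(1 / 2 : ℝ) ≤ min 0 lam := le_min (by norm_num) hlam.le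
  calc (x + min 0 lam) * (x + min 0 lam + 4) * (x + lam / 2) ^ 2
    _ ≤ ((x + min 0 lam + 2) * (x + lam / 2)) ^ 2 := by nlinarith [sq_nonneg (x + lam / 2)]
    _ ≤ ((x + 1) * (x + 1 + lam)) ^ 2 :=
      pow_le_pow_left₀ (mul_nonneg (by linarith) (by linarith)) root_le 2

theorem Amat_frobenius_bounds (lam : ℝ) (hlam : -(1/2 : ℝ) < lam) (m : ℕ) (hm : 1 ≤ m) :
    4/((2*lam + 1)^2 * (2*lam + 5)) * (((m : ℝ) + min 0 lam) * ((m : ℝ) + min 0 lam + 4)) *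
        ((m : ℝ)^2 * ((m : ℝ) + lam/2)^2 * ((m : ℝ) + lam)^2)
      ≤ frobSq (Amat lam m) ∧
    frobSq (Amat lam m) ≤
      4/((2*lam + 1)^2 * (2*lam + 5)) * ((m : ℝ) + lam + max 0 lam + 5/2)^2 *
        (((m : ℝ) + 1/2)^2 * ((m : ℝ) + 1/2 + lam/2)^2 * ((m : ℝ) + 1/2 + lam)^2) := by
  have hm' : (1 : ℝ) ≤ m := by exact_mod_cast hm
  have h₅ : 0 < 2 * lam + 5 := by linarith
  have hμ : (m : ℝ) + lam ≤ m + lam + max 0 lam := le_add_of_nonneg_right (le_max_left 0 lam)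
  constructor
  · refine le_trans ?_ (le_frobSq_Amat hlam hm)
    calc
      _ = 4 / ((2 * lam + 1) ^ 2 * (2 * lam + 5)) * (((m : ℝ) + min 0 lam) * (m + min 0 lam + 4) *
          (m + lam / 2) ^ 2 * (m * (m + lam)) ^ 2) := by ring
      _ ≤ 4 / ((2 * lam + 1) ^ 2 * (2 * lam + 5)) *
          (((m + 1) * (m + 1 + lam)) ^ 2 * (m * (m + lam)) ^ 2) := by
        gcongr
        exact add_min_mul_le_sq hlam hm'
      _ = _ := by ring
  · refine (frobSq_Amat_le hlam hm).trans ?_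
    calc
      _ = 4 / ((2 * lam + 1) ^ 2 * (2 * lam + 5)) * ((m : ℝ) + lam + 5 / 2) ^ 2 *
          ((m + 1 / 2) ^ 2 * (m + 1 / 2 + lam / 2) ^ 2 * (m + 1 / 2 + lam) ^ 2) := by ring
      _ ≤ _ := by
        gcongr
        linarith
end

section
/- Let λ be a real number with λ > -1/2 and let n ≥ 1 be a natural number. Then the best Markov constant satisfies (c_n(λ))² ≥ (2/(2λ+1))·n(n+λ)(n+2λ). -/
open Polynomial Filter

/-- The weighted `L_2` norm with the Gegenbauer weight `w_lam(t) = (1-t^2)^(lam-1/2)`. -/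
noncomputable def gegNorm (lam : ℝ) (f : ℝ → ℝ) : ℝ :=
  (∫ x in (-1:ℝ)..1, (f x) ^ 2 * (1 - x ^ 2) ^ (lam - 1/2)) ^ ((1:ℝ)/2)

/-- The best Markov constant `c_n(lam)` in `‖p'‖ ≤ c_n(lam) ‖p‖` for polynomials of degree ≤ n. -/
noncomputable def markovConst (lam : ℝ) (n : ℕ) : ℝ :=
  sSup { r : ℝ | ∃ p : Polynomial ℝ, p ≠ 0 ∧ p.natDegree ≤ n ∧
    r = gegNorm lam (fun x => (Polynomial.derivative p).eval x) /
        gegNorm lam (fun x => p.eval x) }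

/-!
The bound is attained by the ratio of the `n`-th monic orthogonal polynomial `y`. Write `L` for
integration against the weight, `a = 2λ + 1` and `D p = (1 - x²) p'' - a x p'`. Integration by parts
makes `D` symmetric for `L`; since `D` does not raise degrees, `y` is an eigenfunction,
`D y = -n (n + 2λ) y`. Integrating by parts in `x (p')²` gives the Rellich-type identity
`a L(p'²) = 2λ L((1 - x²) p'²) - 2 L(x p' D p)`, valid for every polynomial `p`. At `p = y` the
first term is `2λ n (n + 2λ) L(y²)`, and `L(x y' y) = n L(y²)` because `x y' - n y` has degree
below `n`; together they give `a L(y'²) = 2 n (n + λ) (n + 2λ) L(y²)`.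
-/

section MonicOrthogonal

variable {R : Type*} [CommRing R]

/-- `y` is the monic orthogonal polynomial of its degree for the moment functional `L`. -/
structure IsMonicOrthogonal (L : R[X] →ₗ[R] R) (y : R[X]) : Prop where
  monic : y.Monic
  map_mul_eq_zero : ∀ q : R[X], q.degree < y.natDegree → L (y * q) = 0

lemma IsMonicOrthogonal.map_mul_of_natDegree_le {L : R[X] →ₗ[R] R} {y q : R[X]}
    (hy : IsMonicOrthogonal L y) (hq : q.natDegree ≤ y.natDegree) :
    L (y * q) = q.coeff y.natDegree * L (y * y) := by
  have hlt : (q - q.coeff y.natDegree • y).degree < y.natDegree :=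
    (degree_lt_iff_coeff_zero _ _).2 fun m hm => by
      rcases hm.eq_or_lt with rfl | hm
      · simp [hy.monic.coeff_natDegree]
      · simp [coeff_eq_zero_of_natDegree_lt (hq.trans_lt hm), coeff_eq_zero_of_natDegree_lt hm]
  have h := hy.map_mul_eq_zero _ hlt
  rwa [mul_sub, mul_smul_comm, map_sub, map_smul, smul_eq_mul, sub_eq_zero] at h

lemma coeff_X_mul_derivative (p : R[X]) (m : ℕ) : (X * derivative p).coeff m = m * p.coeff m := by
  cases m with
  | zero => simp
  | succ k =>
    rw [coeff_X_mul, coeff_derivative, Nat.cast_succ, mul_comm]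

lemma IsMonicOrthogonal.map_mul_X_mul_derivative {L : R[X] →ₗ[R] R} {y : R[X]}
    (hy : IsMonicOrthogonal L y) : L (y * (X * derivative y)) = y.natDegree * L (y * y) := by
  have hdeg : (X * derivative y).natDegree ≤ y.natDegree :=
    natDegree_le_iff_coeff_eq_zero.2 fun m hm => by
      rw [coeff_X_mul_derivative, coeff_eq_zero_of_natDegree_lt hm, mul_zero]
  rw [hy.map_mul_of_natDegree_le hdeg, coeff_X_mul_derivative, hy.monic.coeff_natDegree, mul_one]

end MonicOrthogonal

section PosDefFunctional

/-- The moment functional `L` is positive definite, so that `(p, q) ↦ L (p * q)` is an inner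
product on polynomials. -/
def IsPosDefFunctional (L : ℝ[X] →ₗ[ℝ] ℝ) : Prop :=
  ∀ p : ℝ[X], p ≠ 0 → 0 < L (p * p)

namespace IsPosDefFunctional

variable {L : ℝ[X] →ₗ[ℝ] ℝ}

lemma map_mul_self_nonneg (hL : IsPosDefFunctional L) (p : ℝ[X]) : 0 ≤ L (p * p) := by
  rcases eq_or_ne p 0 with rfl | hp
  · simp
  · exact (hL p hp).le

lemma eq_zero_of_map_mul_self (hL : IsPosDefFunctional L) {p : ℝ[X]} (h : L (p * p) = 0) :
    p = 0 := by
  by_contra hp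
  exact (hL p hp).ne' h

/-- The inner product `(p, q) ↦ L (p * q)` on polynomials. It is not an instance, since `ℝ[X]`
carries one such inner product for each `L`. -/
@[reducible]
noncomputable def innerCore (hL : IsPosDefFunctional L) : InnerProductSpace.Core ℝ ℝ[X] where
  inner p q := L (p * q)
  conj_inner_symm p q := by simp [mul_comm]
  re_inner_nonneg := hL.map_mul_self_nonneg
  add_left p q r := by simp [add_mul]
  smul_left p q c := by simp
  definite _ := hL.eq_zero_of_map_mul_self

lemma exists_isMonicOrthogonal (hL : IsPosDefFunctional L) (n : ℕ) :
    ∃ y : ℝ[X], IsMonicOrthogonal L y ∧ y.natDegree = n := by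
  let _ : NormedAddCommGroup ℝ[X] := hL.innerCore.toNormedAddCommGroup
  let _ : InnerProductSpace ℝ ℝ[X] := InnerProductSpace.ofCore hL.innerCore.toCore
  let r : ℝ[X] := (degreeLT ℝ n).starProjection (X ^ n)
  have hr : r.degree < n := mem_degreeLT.1 (Submodule.starProjection_apply_mem _ _)
  have hdeg : (X ^ n - r).natDegree = n :=
    natDegree_eq_of_degree_eq_some <| by
      rw [degree_sub_eq_left_of_degree_lt (by rwa [degree_X_pow]), degree_X_pow]
  refine ⟨X ^ n - r, ⟨monic_X_pow_sub hr, fun q hq => ?_⟩, hdeg⟩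
  rw [hdeg] at hq
  exact Submodule.starProjection_inner_eq_zero (K := degreeLT ℝ n) (X ^ n) q (mem_degreeLT.2 hq)

lemma exists_map_mul_self_le (hL : IsPosDefFunctional L) (T : ℝ[X] →ₗ[ℝ] ℝ[X])
    (V : Submodule ℝ ℝ[X]) [FiniteDimensional ℝ V] :
    ∃ K : ℝ, ∀ p ∈ V, L (T p * T p) ≤ K * L (p * p) := by
  let _ : NormedAddCommGroup ℝ[X] := hL.innerCore.toNormedAddCommGroup
  let _ : InnerProductSpace ℝ ℝ[X] := InnerProductSpace.ofCore hL.innerCore.toCore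
  have norm_sq (p : ℝ[X]) : ‖p‖ ^ 2 = L (p * p) := (real_inner_self_eq_norm_sq p).symm
  let S := (T.comp V.subtype).toContinuousLinearMap
  refine ⟨‖S‖ ^ 2, fun p hp => ?_⟩
  have hnorm : ‖T p‖ ≤ ‖S‖ * ‖p‖ := S.le_opNorm ⟨p, hp⟩
  rw [← norm_sq, ← norm_sq, ← mul_pow]
  gcongr

end IsPosDefFunctional

end PosDefFunctional

section GegenbauerOperator

variable {R : Type*} [CommRing R]

/-- The Gegenbauer differential operator `p ↦ (1 - x²) p'' - a x p'`, where `a` is the `2λ + 1` of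
the classical notation. -/
noncomputable def gegenbauerOp (a : R) (p : R[X]) : R[X] :=
  (1 - X ^ 2) * derivative (derivative p) - a • (X * derivative p)

lemma coeff_gegenbauerOp (a : R) (p : R[X]) (m : ℕ) :
    (gegenbauerOp a p).coeff m =
      (m + 2) * (m + 1) * p.coeff (m + 2) - m * (m - 1 + a) * p.coeff m := by
  have euler : gegenbauerOp a p = derivative (derivative p) -
      (X * derivative (X * derivative p) - X * derivative p) - a • (X * derivative p) := by
    rw [gegenbauerOp, derivative_mul, derivative_X]
    ring
  simp only [euler, coeff_sub, coeff_smul, coeff_X_mul_derivative, coeff_derivative, smul_eq_mul]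
  push_cast
  ring

lemma degree_gegenbauerOp_lt (a : R) {p : R[X]} {n : ℕ} (hp : p.degree < n) :
    (gegenbauerOp a p).degree < n := by
  rw [degree_lt_iff_coeff_zero] at hp ⊢
  intro m hm
  rw [coeff_gegenbauerOp, hp m hm, hp (m + 2) (by lia), mul_zero, mul_zero, sub_zero]

lemma degree_gegenbauerOp_add_smul_lt (a : R) (p : R[X]) :
    (gegenbauerOp a p + ((p.natDegree : R) * (p.natDegree - 1 + a)) • p).degree < p.natDegree := by
  refine (degree_lt_iff_coeff_zero _ _).2 fun m hm => ?_
  rw [coeff_add, coeff_gegenbauerOp, coeff_smul, smul_eq_mul,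
    coeff_eq_zero_of_natDegree_lt (n := m + 2) (by lia)]
  rcases hm.eq_or_lt with rfl | hm
  · ring
  · rw [coeff_eq_zero_of_natDegree_lt hm]
    ring

/-- The moment functional `L` satisfies the Pearson equation of the weight `(1 - x²) ^ (a / 2 - 1)`,
that is, it annihilates `(q (1 - x²) w)' / w` for every polynomial `q`. -/
def IsGegenbauerFunctional (a : R) (L : R[X] →ₗ[R] R) : Prop :=
  ∀ q : R[X], L ((1 - X ^ 2) * derivative q) = a * L (X * q)

namespace IsGegenbauerFunctional

variable {a : R} {L : R[X] →ₗ[R] R}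

lemma map_mul_gegenbauerOp (hL : IsGegenbauerFunctional a L) (p q : R[X]) :
    L (p * gegenbauerOp a q) = -L ((1 - X ^ 2) * (derivative p * derivative q)) := by
  have expand : (1 - X ^ 2) * derivative (p * derivative q) = p * gegenbauerOp a q +
      (1 - X ^ 2) * (derivative p * derivative q) + a • (X * (p * derivative q)) := by
    rw [gegenbauerOp, derivative_mul, smul_eq_C_mul, smul_eq_C_mul]
    ring
  have pearson := hL (p * derivative q)
  rw [expand, map_add, map_add, map_smul, smul_eq_mul] at pearson
  linear_combination pearson

lemma map_gegenbauerOp_mul (hL : IsGegenbauerFunctional a L) (p q : R[X]) :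
    L (gegenbauerOp a p * q) = L (p * gegenbauerOp a q) := by
  rw [mul_comm, hL.map_mul_gegenbauerOp, hL.map_mul_gegenbauerOp, mul_comm (derivative q)]

/-- The Rellich identity: test the Pearson equation on `x (p')²`. -/
lemma mul_map_derivative_mul_self (hL : IsGegenbauerFunctional a L) (p : R[X]) :
    a * L (derivative p * derivative p) =
      (a - 1) * L ((1 - X ^ 2) * (derivative p * derivative p)) -
        2 * L (gegenbauerOp a p * (X * derivative p)) := by
  have expand : (1 - X ^ 2) * derivative (X * (derivative p * derivative p)) =
      (1 - X ^ 2) * (derivative p * derivative p) +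
        (2 : R) • (gegenbauerOp a p * (X * derivative p)) +
        (2 * a) • (X * (X * (derivative p * derivative p))) := by
    simp only [gegenbauerOp, derivative_mul, derivative_X, smul_eq_C_mul, C_mul, C_ofNat]
    ring
  have split : derivative p * derivative p = (1 - X ^ 2) * (derivative p * derivative p) +
      X * (X * (derivative p * derivative p)) := by
    ring
  have pearson := hL (X * (derivative p * derivative p))
  have map_split := congrArg L split
  simp only [expand, map_add, map_smul, smul_eq_mul] at pearson
  rw [map_add] at map_split
  linear_combination a * map_split + pearson

end IsGegenbauerFunctional

lemma IsMonicOrthogonal.gegenbauerOp_eq {a : ℝ} {L : ℝ[X] →ₗ[ℝ] ℝ} {y : ℝ[X]}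
    (hy : IsMonicOrthogonal L y) (hpos : IsPosDefFunctional L) (hL : IsGegenbauerFunctional a L) :
    gegenbauerOp a y = -((y.natDegree * (y.natDegree - 1 + a)) • y) := by
  set c : ℝ := y.natDegree * (y.natDegree - 1 + a)
  set r := gegenbauerOp a y + c • y
  have hdeg : r.degree < y.natDegree := degree_gegenbauerOp_add_smul_lt a y
  have hself : L (r * r) = 0 := calc
    L (r * r) = L (gegenbauerOp a y * r) + c * L (y * r) := by
      rw [← smul_eq_mul c, ← map_smul, ← map_add, ← smul_mul_assoc, ← add_mul]
    _ = L (y * gegenbauerOp a r) + c * L (y * r) := by rw [hL.map_gegenbauerOp_mul]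
    _ = 0 := by
      rw [hy.map_mul_eq_zero _ (degree_gegenbauerOp_lt a hdeg), hy.map_mul_eq_zero r hdeg,
        mul_zero, add_zero]
  exact eq_neg_of_add_eq_zero_left (hpos.eq_zero_of_map_mul_self hself)

lemma IsMonicOrthogonal.mul_map_derivative_mul_self {a : ℝ} {L : ℝ[X] →ₗ[ℝ] ℝ} {y : ℝ[X]}
    (hy : IsMonicOrthogonal L y) (hpos : IsPosDefFunctional L) (hL : IsGegenbauerFunctional a L) :
    a * L (derivative y * derivative y) =
      y.natDegree * (y.natDegree - 1 + a) * (2 * y.natDegree - 1 + a) * L (y * y) := by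
  have hop := hy.gegenbauerOp_eq hpos hL
  have henergy := hL.map_mul_gegenbauerOp y y
  have hrellich := hL.mul_map_derivative_mul_self y
  rw [hop, mul_neg, mul_smul_comm, map_neg, map_smul, smul_eq_mul] at henergy
  rw [hop, neg_mul, smul_mul_assoc, map_neg, map_smul, smul_eq_mul,
    hy.map_mul_X_mul_derivative] at hrellich
  linear_combination hrellich + (a - 1) * henergy

end GegenbauerOperator

section WeightedIntegral

open MeasureTheory Set

variable {w : ℝ → ℝ} {a b : ℝ}

lemma intervalIntegrable_eval_mul (hw : IntervalIntegrable w volume a b) (p : ℝ[X]) :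
    IntervalIntegrable (fun x => p.eval x * w x) volume a b :=
  hw.continuousOn_mul p.continuous.continuousOn

/-- Integration of polynomials against an integrable weight `w` on `[a, b]`, as a moment
functional. -/
noncomputable def weightedIntegral (hw : IntervalIntegrable w volume a b) : ℝ[X] →ₗ[ℝ] ℝ where
  toFun p := ∫ x in a..b, p.eval x * w x
  map_add' p q := by
    rw [← intervalIntegral.integral_add (intervalIntegrable_eval_mul hw p)
      (intervalIntegrable_eval_mul hw q)]
    simp only [eval_add, add_mul]
  map_smul' c p := by
    simp [mul_assoc]

lemma isPosDefFunctional_weightedIntegral (hw : IntervalIntegrable w volume a b) (hab : a < b)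
    (hpos : ∀ x ∈ Ioo a b, 0 < w x) : IsPosDefFunctional (weightedIntegral hw) := by
  intro p hp
  have hnonneg : 0 ≤ᵐ[volume.restrict (uIoc a b)] fun x => (p * p).eval x * w x := by
    rw [uIoc_of_le hab.le, ← restrict_Ioo_eq_restrict_Ioc]
    filter_upwards [ae_restrict_mem measurableSet_Ioo] with x hx
    rw [eval_mul]
    exact mul_nonneg (mul_self_nonneg _) (hpos x hx).le
  have hsupport : Ioo a b \ (p.roots.toFinset : Set ℝ) ⊆
      Function.support (fun x => (p * p).eval x * w x) ∩ Ioc a b := by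
    rintro x ⟨hx, hroot⟩
    have heval : p.eval x ≠ 0 := by simpa [hp] using hroot
    refine ⟨?_, Ioo_subset_Ioc_self hx⟩
    rw [Function.mem_support, eval_mul]
    exact mul_ne_zero (mul_ne_zero heval heval) (hpos x hx).ne'
  refine (intervalIntegral.integral_pos_iff_support_of_nonneg_ae' hnonneg
    (intervalIntegrable_eval_mul hw _)).2 ⟨hab, lt_of_lt_of_le ?_ (measure_mono hsupport)⟩
  rw [measure_sdiff_null (p.roots.toFinset.finite_toSet.measure_zero _), Real.volume_Ioo]
  exact ENNReal.ofReal_pos.2 (sub_pos.2 hab)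

end WeightedIntegral

section GegenbauerWeight

open MeasureTheory Set

variable {s lam : ℝ}

lemma one_sub_sq_pos {x : ℝ} (hx : x ∈ Ioo (-1 : ℝ) 1) : 0 < 1 - x ^ 2 := by
  nlinarith [hx.1, hx.2]

lemma intervalIntegrable_one_sub_sq_rpow (hs : -1 < s) :
    IntervalIntegrable (fun x : ℝ => (1 - x ^ 2) ^ s) volume (-1) 1 := by
  have right : IntervalIntegrable (fun x : ℝ => (1 - x ^ 2) ^ s) volume 0 1 := by
    have hsing : IntervalIntegrable (fun x : ℝ => (1 - x) ^ s) volume 0 1 := by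
      simpa using (intervalIntegral.intervalIntegrable_rpow' (a := 1) (b := 0) hs).comp_sub_left 1
    have hcont : ContinuousOn (fun x : ℝ => (1 + x) ^ s) (uIcc 0 1) := by
      refine ContinuousOn.rpow_const (by fun_prop) fun x hx => Or.inl ?_
      rw [uIcc_of_le zero_le_one] at hx
      linarith [hx.1]
    refine (hsing.mul_continuousOn hcont).congr fun x hx => ?_
    rw [uIoc_of_le zero_le_one] at hx
    change (1 - x) ^ s * (1 + x) ^ s = (1 - x ^ 2) ^ s
    rw [← Real.mul_rpow (by linarith [hx.2]) (by linarith [hx.1])]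
    ring_nf
  have left : IntervalIntegrable (fun x : ℝ => (1 - x ^ 2) ^ s) volume (-1) 0 := by
    simpa using (right.comp_sub_left 0).symm
  exact left.trans right

lemma hasDerivAt_eval_mul_one_sub_sq_rpow (s : ℝ) (q : ℝ[X]) {x : ℝ} (hx : x ∈ Ioo (-1 : ℝ) 1) :
    HasDerivAt (fun x => q.eval x * (1 - x ^ 2) ^ (s + 1))
      (((1 - X ^ 2) * derivative q - (2 * (s + 1)) • (X * q)).eval x * (1 - x ^ 2) ^ s) x := by
  have hne : 1 - x ^ 2 ≠ 0 := (one_sub_sq_pos hx).ne'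
  have hbase : HasDerivAt (fun x : ℝ => 1 - x ^ 2) (-(2 * x)) x := by
    simpa using (hasDerivAt_pow 2 x).const_sub 1
  refine ((q.hasDerivAt x).mul (hbase.rpow_const (p := s + 1) (Or.inl hne))).congr_deriv ?_
  rw [add_sub_cancel_right, Real.rpow_add_one hne]
  simp only [eval_sub, eval_mul, eval_smul, eval_one, eval_pow, eval_X, smul_eq_mul]
  ring

lemma isGegenbauerFunctional_weightedIntegral (hs : -1 < s) :
    IsGegenbauerFunctional (2 * (s + 1))
      (weightedIntegral (intervalIntegrable_one_sub_sq_rpow hs)) := by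
  intro q
  have hcont : ContinuousOn (fun x => q.eval x * (1 - x ^ 2) ^ (s + 1)) (Icc (-1) 1) :=
    q.continuous.continuousOn.mul
      (ContinuousOn.rpow_const (by fun_prop) fun x _ => Or.inr (by linarith))
  have hintegral := intervalIntegral.integral_eq_sub_of_hasDerivAt_of_le (by norm_num) hcont
    (fun x hx => hasDerivAt_eval_mul_one_sub_sq_rpow s q hx)
    (intervalIntegrable_eval_mul (intervalIntegrable_one_sub_sq_rpow hs) _)
  have hboundary : (0 : ℝ) ^ (s + 1) = 0 := Real.zero_rpow (by linarith)
  rw [← smul_eq_mul (2 * (s + 1)), ← map_smul, ← sub_eq_zero, ← map_sub]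
  exact hintegral.trans (by norm_num [hboundary])

/-- Integration against the Gegenbauer weight with parameter `lam`. -/
noncomputable def gegenbauerIntegral (hlam : -(1 / 2 : ℝ) < lam) : ℝ[X] →ₗ[ℝ] ℝ :=
  weightedIntegral (intervalIntegrable_one_sub_sq_rpow (s := lam - 1 / 2) (by linarith))

lemma isPosDefFunctional_gegenbauerIntegral (hlam : -(1 / 2 : ℝ) < lam) :
    IsPosDefFunctional (gegenbauerIntegral hlam) :=
  isPosDefFunctional_weightedIntegral _ (by norm_num) fun _ hx =>
    Real.rpow_pos_of_pos (one_sub_sq_pos hx) _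

lemma isGegenbauerFunctional_gegenbauerIntegral (hlam : -(1 / 2 : ℝ) < lam) :
    IsGegenbauerFunctional (2 * lam + 1) (gegenbauerIntegral hlam) := by
  have ha : 2 * lam + 1 = 2 * (lam - 1 / 2 + 1) := by ring
  rw [ha]
  exact isGegenbauerFunctional_weightedIntegral (by linarith)

end GegenbauerWeight

section MarkovConstant

variable {lam : ℝ}

lemma gegNorm_eval (hlam : -(1 / 2 : ℝ) < lam) (p : ℝ[X]) :
    gegNorm lam (fun x => p.eval x) = √(gegenbauerIntegral hlam (p * p)) := by
  rw [gegNorm, Real.sqrt_eq_rpow]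
  simp only [gegenbauerIntegral, weightedIntegral, LinearMap.coe_mk, AddHom.coe_mk, eval_mul, sq]

lemma gegNorm_derivative_div_gegNorm (hlam : -(1 / 2 : ℝ) < lam) (p : ℝ[X]) :
    gegNorm lam (fun x => (derivative p).eval x) / gegNorm lam (fun x => p.eval x) =
      √(gegenbauerIntegral hlam (derivative p * derivative p) /
        gegenbauerIntegral hlam (p * p)) := by
  rw [gegNorm_eval hlam, gegNorm_eval hlam,
    Real.sqrt_div' _ ((isPosDefFunctional_gegenbauerIntegral hlam).map_mul_self_nonneg p)]

/-- Rules out the junk value `0` of `sSup` in `markovConst`. -/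
lemma bddAbove_markovConst (hlam : -(1 / 2 : ℝ) < lam) (n : ℕ) :
    BddAbove { r : ℝ | ∃ p : ℝ[X], p ≠ 0 ∧ p.natDegree ≤ n ∧
      r = gegNorm lam (fun x => (derivative p).eval x) / gegNorm lam (fun x => p.eval x) } := by
  have hpos := isPosDefFunctional_gegenbauerIntegral hlam
  obtain ⟨K, hK⟩ := hpos.exists_map_mul_self_le derivative (degreeLT ℝ (n + 1))
  refine ⟨√K, ?_⟩
  rintro _ ⟨p, hp, hdeg, rfl⟩
  have hmem : p ∈ degreeLT ℝ (n + 1) :=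
    mem_degreeLT.2 ((natDegree_lt_iff_degree_lt hp).1 (Nat.lt_succ_of_le hdeg))
  rw [gegNorm_derivative_div_gegNorm hlam]
  exact Real.sqrt_le_sqrt ((div_le_iff₀ (hpos p hp)).2 (hK p hmem))

lemma gegenbauerIntegral_derivative_div_le_markovConst_sq (hlam : -(1 / 2 : ℝ) < lam) {n : ℕ}
    {p : ℝ[X]} (hp : p ≠ 0) (hdeg : p.natDegree ≤ n) :
    gegenbauerIntegral hlam (derivative p * derivative p) / gegenbauerIntegral hlam (p * p) ≤
      markovConst lam n ^ 2 := by
  have hle : √(gegenbauerIntegral hlam (derivative p * derivative p) /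
      gegenbauerIntegral hlam (p * p)) ≤ markovConst lam n :=
    le_csSup (bddAbove_markovConst hlam n)
      ⟨p, hp, hdeg, (gegNorm_derivative_div_gegNorm hlam p).symm⟩
  exact (Real.sqrt_le_left ((Real.sqrt_nonneg _).trans hle)).1 hle

end MarkovConstant

theorem markov_lower_bound_diagonal (lam : ℝ) (hlam : -(1/2 : ℝ) < lam) (n : ℕ) (hn : 1 ≤ n) :
    2/(2*lam + 1) * ((n : ℝ) * ((n : ℝ) + lam) * ((n : ℝ) + 2*lam)) ≤ (markovConst lam n)^2 := by
  have hpos := isPosDefFunctional_gegenbauerIntegral hlam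
  obtain ⟨y, hy, rfl⟩ := hpos.exists_isMonicOrthogonal n
  have hne : y ≠ 0 := hy.monic.ne_zero
  have hnorm := hy.mul_map_derivative_mul_self hpos (isGegenbauerFunctional_gegenbauerIntegral hlam)
  refine le_trans (le_of_eq ?_)
    (gegenbauerIntegral_derivative_div_le_markovConst_sq hlam hne le_rfl)
  have ha : 2 * lam + 1 ≠ 0 := by linarith
  rw [eq_div_iff (hpos y hne).ne']
  field_simp
  linear_combination -hnorm
end
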